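/- arXiv:1508.02732 — 2 statements merged into one kernel-verified Lean document; each statement's English description precedes it below -/
import Mathlib

section
/- Let f be a smooth (0,2)-tensor field on V which is antisymmetric (f_{jk} = −f_{kj}) and satisfies the Killing–Yano equation ∇_i f_{jk} + ∇_j f_{ik} = 0 for all i,j,k. Let x : I → V be a geodesic. Then the vector field L along x with components L^a(τ) := ∑_{b,c} g^{ab}(x(τ)) f_{bc}(x(τ)) ẋ^c(τ) is parallel propagated along x: dL^a/dτ + ∑_{b,c} Γ^a_{bc}(x(τ)) ẋ^b(τ) L^c(τ) = 0 for all a and all τ ∈ I. -/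
noncomputable section

/-- Partial derivative in the i-th coordinate direction of ℝⁿ. -/
def pd {n : ℕ} (i : Fin n) (f : (Fin n → ℝ) → ℝ) (x : Fin n → ℝ) : ℝ :=
  fderiv ℝ f x (Pi.single i 1)

/-- Christoffel symbols Γ^i_{jk} := (1/2)∑_l g^{il}(∂_j g_{lk} + ∂_k g_{jl} − ∂_l g_{jk})
of the metric `g` with pointwise inverse `ginv`. -/
def christoffel {n : ℕ} (g ginv : (Fin n → ℝ) → Fin n → Fin n → ℝ)
    (i j k : Fin n) (x : Fin n → ℝ) : ℝ :=
  (1 / 2) * ∑ l, ginv x i l *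
    (pd j (fun y => g y l k) x + pd k (fun y => g y j l) x - pd l (fun y => g y j k) x)

/-- Covariant derivative ∇_i T_{jk} of a (0,2)-tensor field. -/
def covDeriv {n : ℕ} (g ginv : (Fin n → ℝ) → Fin n → Fin n → ℝ)
    (T : (Fin n → ℝ) → Fin n → Fin n → ℝ) (i j k : Fin n) (x : Fin n → ℝ) : ℝ :=
  pd i (fun y => T y j k) x
    - ∑ l, christoffel g ginv l i j x * T x l k
    - ∑ l, christoffel g ginv l i k x * T x j l

theorem ky_dir {n : ℕ} (φ : (Fin n → ℝ) → ℝ) (p v : Fin n → ℝ) :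
    fderiv ℝ φ p v = ∑ i, v i * pd i φ p := by
  have h : v = ∑ i, v i • (Pi.single i (1 : ℝ) : Fin n → ℝ) := by
    ext j
    simp [Finset.sum_apply, Pi.single_apply]
  conv_lhs => rw [h]
  rw [map_sum]
  simp only [map_smul, pd, smul_eq_mul]

theorem ky_curve {n : ℕ} {V : Set (Fin n → ℝ)} (hV : IsOpen V) {φ : (Fin n → ℝ) → ℝ}
    (hφ : ContDiffOn ℝ (⊤ : ℕ∞) φ V) {x : ℝ → Fin n → ℝ} {τ : ℝ} (hτ : x τ ∈ V)
    {v : Fin n → ℝ} (hx : HasDerivAt x v τ) :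
    HasDerivAt (fun t => φ (x t)) (∑ i, v i * pd i φ (x τ)) τ := by
  have h1 : DifferentiableAt ℝ φ (x τ) :=
    (hφ.contDiffAt (hV.mem_nhds hτ)).differentiableAt (by simp)
  rw [← ky_dir]
  exact h1.hasFDerivAt.comp_hasDerivAt τ hx

theorem ky_alg {n : ℕ} (G H F A dG dH dF N : Matrix (Fin n) (Fin n) ℝ) (v w : Fin n → ℝ)
    (hGH : G * H = 1) (hd : dG * H + G * dH = 0)
    (hdG : dG = G * A + A.transpose * G)
    (hdF : dF = N + A.transpose * F + F * A) (hN : N.mulVec v = 0)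
    (hw : w = - A.mulVec v) :
    (dH * F).mulVec v + (H * dF).mulVec v + (H * F).mulVec w + A.mulVec ((H * F).mulVec v) = 0 := by
  have hHG : H * G = 1 := mul_eq_one_comm.mp hGH
  have hdH : dH = - (A * H) - H * A.transpose := by
    have h := congrArg (fun M => H * M) hd
    simp only [mul_add, ← mul_assoc, hHG, one_mul, mul_zero] at h
    rw [eq_neg_of_add_eq_zero_right h, hdG]
    have : H * (G * A + A.transpose * G) * H = (H * G) * A * H + H * A.transpose * (G * H) := by
      noncomm_ring
    rw [this, hHG, hGH]; noncomm_ring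
  have h0 : (H * N).mulVec v = 0 := by rw [← Matrix.mulVec_mulVec, hN, Matrix.mulVec_zero]
  have : (dH * F) + (H * dF) - (H * F * A) + A * (H * F) = H * N := by
    rw [hdH, hdF]; noncomm_ring
  rw [← h0, ← this, hw]
  simp only [Matrix.add_mulVec, Matrix.sub_mulVec, Matrix.mulVec_neg, Matrix.mulVec_mulVec]
  abel

/-- The vector L^a := g^{ab} f_{bc} ẋ^c built from a Killing–Yano tensor f is
parallel propagated along any geodesic. -/
theorem killingYano_parallel_transport
    (n : ℕ) (V : Set (Fin n → ℝ)) (hV : IsOpen V)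
    (g ginv f : (Fin n → ℝ) → Fin n → Fin n → ℝ)
    (hg : ∀ i j, ContDiffOn ℝ (⊤ : ℕ∞) (fun x => g x i j) V)
    (hginv : ∀ i j, ContDiffOn ℝ (⊤ : ℕ∞) (fun x => ginv x i j) V)
    (hgsymm : ∀ x ∈ V, ∀ i j, g x i j = g x j i)
    (hinv : ∀ x ∈ V, ∀ i j, ∑ k, g x i k * ginv x k j = if i = j then (1 : ℝ) else 0)
    (hf : ∀ i j, ContDiffOn ℝ (⊤ : ℕ∞) (fun x => f x i j) V)
    (hfanti : ∀ x ∈ V, ∀ j k, f x j k = -f x k j)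
    (hKY : ∀ x ∈ V, ∀ i j k,
      covDeriv g ginv f i j k x + covDeriv g ginv f j i k x = 0)
    (I : Set ℝ) (hI : Set.OrdConnected I) (hIopen : IsOpen I)
    (x : ℝ → Fin n → ℝ) (hx : ContDiffOn ℝ 2 x I)
    (hxV : ∀ τ ∈ I, x τ ∈ V)
    (hgeo : ∀ τ ∈ I, ∀ i, deriv (deriv (fun t => x t i)) τ
        + ∑ j, ∑ k, christoffel g ginv i j k (x τ)
            * deriv (fun t => x t j) τ * deriv (fun t => x t k) τ = 0) :
    ∀ τ ∈ I, ∀ a,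
      deriv (fun t =>
          ∑ b, ∑ c, ginv (x t) a b * f (x t) b c * deriv (fun s => x s c) t) τ
        + ∑ b, ∑ c, christoffel g ginv a b c (x τ) * deriv (fun t => x t b) τ *
            (∑ d, ∑ e, ginv (x τ) c d * f (x τ) d e * deriv (fun t => x t e) τ)
        = 0 := by
  intro τ hτ a
  have hnI := hIopen.mem_nhds hτ
  have hp := hxV τ hτ
  have hxC : ∀ t ∈ I, ContDiffAt ℝ 2 x t := fun t ht => hx.contDiffAt (hIopen.mem_nhds ht)
  have hxc : ∀ c, ContDiffAt ℝ 2 (fun t => x t c) τ := fun c => contDiffAt_pi.mp (hxC τ hτ) c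
  obtain ⟨v, hv⟩ : ∃ v : Fin n → ℝ, v = fun c => deriv (fun t => x t c) τ := ⟨_, rfl⟩
  obtain ⟨w, hw⟩ : ∃ w : Fin n → ℝ, w = fun c => deriv (deriv (fun t => x t c)) τ := ⟨_, rfl⟩
  have hvc : ∀ c, deriv (fun t => x t c) τ = v c := fun c => by rw [hv]
  have hxd : HasDerivAt x v τ := by
    rw [hasDerivAt_pi]
    intro c
    rw [← hvc]
    exact ((hxc c).differentiableAt (by simp)).hasDerivAt
  have hwd : ∀ c, HasDerivAt (deriv (fun t => x t c)) (w c) τ := by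
    intro c
    rw [hw]
    have : ContDiffAt ℝ 1 (deriv (fun t => x t c)) τ :=
      ((contDiffOn_pi.mp hx c).deriv_of_isOpen hIopen (by norm_num)).contDiffAt hnI
    exact (this.differentiableAt (by simp)).hasDerivAt
  have hginvd := fun i j => ky_curve hV (hginv i j) hp hxd
  have hgd := fun i j => ky_curve hV (hg i j) hp hxd
  have hfd := fun i j => ky_curve hV (hf i j) hp hxd
  -- symmetric partial derivatives
  have hpg : ∀ l i j, pd l (fun y => g y i j) (x τ) = pd l (fun y => g y j i) (x τ) := by
    intro l i j
    have : (fun y => g y i j) =ᶠ[nhds (x τ)] (fun y => g y j i) := by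
      filter_upwards [hV.mem_nhds hp] with y hy using hgsymm y hy i j
    unfold pd
    rw [this.fderiv_eq]
  have hpf : ∀ l i j, pd l (fun y => f y i j) (x τ) = - pd l (fun y => f y j i) (x τ) := by
    intro l i j
    have : (fun y => f y i j) =ᶠ[nhds (x τ)] (fun y => - f y j i) := by
      filter_upwards [hV.mem_nhds hp] with y hy using hfanti y hy i j
    unfold pd
    rw [this.fderiv_eq, fderiv_fun_neg]
    simp
  let G : Matrix (Fin n) (Fin n) ℝ := Matrix.of (g (x τ))
  let H : Matrix (Fin n) (Fin n) ℝ := Matrix.of (ginv (x τ))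
  let F : Matrix (Fin n) (Fin n) ℝ := Matrix.of (f (x τ))
  let A : Matrix (Fin n) (Fin n) ℝ :=
    Matrix.of fun a c => ∑ b, v b * christoffel g ginv a b c (x τ)
  let dG : Matrix (Fin n) (Fin n) ℝ :=
    Matrix.of fun a c => ∑ b, v b * pd b (fun y => g y a c) (x τ)
  let dH : Matrix (Fin n) (Fin n) ℝ :=
    Matrix.of fun a c => ∑ b, v b * pd b (fun y => ginv y a c) (x τ)
  let dF : Matrix (Fin n) (Fin n) ℝ :=
    Matrix.of fun a c => ∑ b, v b * pd b (fun y => f y a c) (x τ)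
  let N : Matrix (Fin n) (Fin n) ℝ :=
    Matrix.of fun a c => ∑ b, v b * covDeriv g ginv f b a c (x τ)
  have hGH : G * H = 1 := by
    ext i j
    rw [Matrix.mul_apply, Matrix.one_apply]
    exact hinv _ hp i j
  have hd : dG * H + G * dH = 0 := by
    ext i j
    have h1 : HasDerivAt (fun t => ∑ k, g (x t) i k * ginv (x t) k j)
        (∑ k, (dG i k * H k j + G i k * dH k j)) τ :=
      HasDerivAt.fun_sum fun k _ => (hgd i k).mul (hginvd k j)
    have h2 : (fun t => ∑ k, g (x t) i k * ginv (x t) k j) =ᶠ[nhds τ]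
        fun _ => if i = j then (1 : ℝ) else 0 := by
      filter_upwards [hnI] with t ht using hinv _ (hxV t ht) i j
    have h3 := h1.unique ((hasDerivAt_const τ _).congr_of_eventuallyEq h2)
    rw [Matrix.add_apply, Matrix.mul_apply, Matrix.mul_apply, ← Finset.sum_add_distrib]
    exact h3
  have hGA : ∀ m c, (G * A) m c = (1/2) * ∑ b, v b * (pd b (fun y => g y m c) (x τ)
      + pd c (fun y => g y b m) (x τ) - pd m (fun y => g y b c) (x τ)) := by
    intro m c
    have hlow : ∀ b, ∑ a, g (x τ) m a * christoffel g ginv a b c (x τ) =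
        (1/2) * (pd b (fun y => g y m c) (x τ)
      + pd c (fun y => g y b m) (x τ) - pd m (fun y => g y b c) (x τ)) := by
      intro b
      have e : ∀ (u : Fin n → ℝ), ∑ a, g (x τ) m a * ((1/2) * ∑ l, ginv (x τ) a l * u l)
          = (1/2) * u m := by
        intro u
        have h := congrFun (congrArg (fun M => Matrix.mulVec M u) hGH) m
        simp only [← Matrix.mulVec_mulVec, Matrix.one_mulVec] at h
        rw [← h, Matrix.mulVec, dotProduct, Finset.mul_sum]
        refine Finset.sum_congr rfl fun a _ => ?_
        rw [mul_left_comm]; rfl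
      exact e fun l => _
    rw [Matrix.mul_apply]
    simp only [G, A, Matrix.of_apply, Finset.mul_sum]
    rw [Finset.sum_comm]
    refine Finset.sum_congr rfl fun b _ => ?_
    rw [mul_left_comm, ← hlow b, Finset.mul_sum]
    refine Finset.sum_congr rfl fun a _ => ?_
    ring
  have hGs : G.transpose = G := by
    ext i j; exact hgsymm _ hp j i
  have hdG : dG = G * A + A.transpose * G := by
    ext m c
    have : (A.transpose * G) m c = (G * A) c m := by
      rw [← Matrix.transpose_apply (G * A), Matrix.transpose_mul, hGs]
    rw [Matrix.add_apply, this, hGA, hGA, ← mul_add, ← Finset.sum_add_distrib, Finset.mul_sum]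
    simp only [dG, Matrix.of_apply]
    refine Finset.sum_congr rfl fun b _ => ?_
    rw [hpg b c m]; ring
  have hdF : dF = N + A.transpose * F + F * A := by
    ext i k
    simp only [Matrix.add_apply, Matrix.mul_apply, Matrix.transpose_apply, dF, N, A, F,
      Matrix.of_apply, covDeriv, mul_sub, Finset.sum_sub_distrib, Finset.mul_sum, Finset.sum_mul]
    have e1 : ∑ l, ∑ b, v b * christoffel g ginv l b i (x τ) * f (x τ) l k
        = ∑ b, ∑ l, v b * (christoffel g ginv l b i (x τ) * f (x τ) l k) := by
      rw [Finset.sum_comm]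
      exact Finset.sum_congr rfl fun _ _ => Finset.sum_congr rfl fun _ _ => by ring
    have e2 : ∑ l, ∑ b, f (x τ) i l * (v b * christoffel g ginv l b k (x τ))
        = ∑ b, ∑ l, v b * (christoffel g ginv l b k (x τ) * f (x τ) i l) := by
      rw [Finset.sum_comm]
      exact Finset.sum_congr rfl fun _ _ => Finset.sum_congr rfl fun _ _ => by ring
    rw [e1, e2]
    ring
  have hcov : ∀ b i k, covDeriv g ginv f b i k (x τ) = - covDeriv g ginv f b k i (x τ) := by
    intro b i k
    unfold covDeriv
    rw [hpf b i k]
    have e1 : ∀ (i k : Fin n), ∑ l, christoffel g ginv l b i (x τ) * f (x τ) l k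
        = - ∑ l, christoffel g ginv l b i (x τ) * f (x τ) k l := by
      intro i k
      rw [← Finset.sum_neg_distrib]
      exact Finset.sum_congr rfl fun l _ => by rw [hfanti _ hp l k]; ring
    rw [e1 i k, e1 k i]; ring
  have hN : N.mulVec v = 0 := by
    ext j
    have e : N.mulVec v j = ∑ k, ∑ b, v b * v k * - covDeriv g ginv f j b k (x τ) := by
      simp only [Matrix.mulVec, dotProduct, N, Matrix.of_apply, Finset.sum_mul]
      refine Finset.sum_congr rfl fun k _ => Finset.sum_congr rfl fun b _ => ?_
      rw [eq_neg_of_add_eq_zero_left (hKY _ hp b j k)]; ring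
    have e2 : N.mulVec v j = - N.mulVec v j := by
      conv_lhs => rw [e, Finset.sum_comm]
      rw [e, ← Finset.sum_neg_distrib]
      refine Finset.sum_congr rfl fun k _ => ?_
      rw [← Finset.sum_neg_distrib]
      refine Finset.sum_congr rfl fun b _ => ?_
      rw [hcov j k b]; ring
    simp only [Pi.zero_apply]
    linarith
  have hwA : w = - A.mulVec v := by
    ext i
    have h := hgeo τ hτ i
    simp only [hvc] at h
    have hwi : w i = deriv (deriv (fun t => x t i)) τ := by rw [hw]
    rw [hwi, eq_neg_of_add_eq_zero_left h, Pi.neg_apply]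
    simp only [Matrix.mulVec, dotProduct, A, Matrix.of_apply, Finset.sum_mul]
    rw [Finset.sum_comm]
    congr 1
    exact Finset.sum_congr rfl fun k _ => Finset.sum_congr rfl fun b _ => by ring
  have key := congrFun (ky_alg G H F A dG dH dF N v w hGH hd hdG hdF hN hwA) a
  have hL : HasDerivAt (fun t =>
      ∑ b, ∑ c, ginv (x t) a b * f (x t) b c * deriv (fun s => x s c) t)
      (∑ b, ∑ c, ((dH a b * F b c + H a b * dF b c) * deriv (fun s => x s c) τ
        + H a b * F b c * w c)) τ :=
    HasDerivAt.fun_sum fun b _ => HasDerivAt.fun_sum fun c _ =>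
      ((hginvd a b).mul (hfd b c)).mul (hwd c)
  have hmv : ∀ (P Q : Matrix (Fin n) (Fin n) ℝ) (u : Fin n → ℝ) (a : Fin n),
      (P * Q).mulVec u a = ∑ b, ∑ c, P a b * Q b c * u c := by
    intro P Q u a
    simp only [Matrix.mulVec, dotProduct, Matrix.mul_apply, Finset.sum_mul]
    rw [Finset.sum_comm]
  rw [hL.deriv]
  simp only [hvc]
  refine Eq.trans ?_ key
  simp only [Pi.add_apply]
  have hlast : A.mulVec ((H * F).mulVec v) a = ∑ b, ∑ c, christoffel g ginv a b c (x τ) * v b *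
      (∑ d, ∑ e, ginv (x τ) c d * f (x τ) d e * v e) := by
    rw [Matrix.mulVec, dotProduct, Finset.sum_comm]
    refine Finset.sum_congr rfl fun c _ => ?_
    rw [hmv, ← Finset.sum_mul]
    congr 1
    simp only [A, Matrix.of_apply]
    exact Finset.sum_congr rfl fun b _ => mul_comm _ _
  rw [hlast, hmv, hmv, hmv]
  congr 1
  simp only [← Finset.sum_add_distrib]
  exact Finset.sum_congr rfl fun b _ => Finset.sum_congr rfl fun c _ => by ring
end
end

section
/- Let f be a smooth (0,2)-tensor field on V which is antisymmetric (f_{jk} = −f_{kj}) and satisfies the Killing–Yano equation ∇_i f_{jk} + ∇_j f_{ik} = 0 for all i,j,k. Define the symmetric (0,2)-tensor field K by K_{ij} := ∑_{k,l} f_{ik} g^{kl} f_{lj}. Then K satisfies the Killing equation: ∇_i K_{jk} + ∇_j K_{ki} + ∇_k K_{ij} = 0 for all i,j,k. -/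
noncomputable section

lemma pd_congr_on {n : ℕ} {V : Set (Fin n → ℝ)} (hV : IsOpen V) {x : Fin n → ℝ} (hx : x ∈ V)
    (i : Fin n) {u v : (Fin n → ℝ) → ℝ} (h : ∀ y ∈ V, u y = v y) : pd i u x = pd i v x := by
  unfold pd
  rw [Filter.EventuallyEq.fderiv_eq (Filter.eventuallyEq_of_mem (hV.mem_nhds hx) h)]

lemma pd_mul' {n : ℕ} {x : Fin n → ℝ} (i : Fin n) {u v : (Fin n → ℝ) → ℝ}
    (hu : DifferentiableAt ℝ u x) (hv : DifferentiableAt ℝ v x) :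
    pd i (fun y => u y * v y) x = pd i u x * v x + u x * pd i v x := by
  unfold pd
  rw [fderiv_fun_mul hu hv]
  simp
  ring

lemma pd_sum' {n : ℕ} {x : Fin n → ℝ} (i : Fin n) {u : Fin n → (Fin n → ℝ) → ℝ}
    (hu : ∀ c, DifferentiableAt ℝ (u c) x) :
    pd i (fun y => ∑ c, u c y) x = ∑ c, pd i (u c) x := by
  unfold pd
  rw [fderiv_fun_sum (fun c _ => hu c)]
  simp

lemma pd_matmul {n : ℕ} {x : Fin n → ℝ} (i : Fin n)
    {M N : (Fin n → ℝ) → Matrix (Fin n) (Fin n) ℝ}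
    (hM : ∀ a b, DifferentiableAt ℝ (fun y => M y a b) x)
    (hN : ∀ a b, DifferentiableAt ℝ (fun y => N y a b) x) :
    (Matrix.of fun a b => pd i (fun y => (M y * N y) a b) x) =
      (Matrix.of fun a b => pd i (fun y => M y a b) x) * N x
        + M x * (Matrix.of fun a b => pd i (fun y => N y a b) x) := by
  ext a b
  simp only [Matrix.of_apply, Matrix.mul_apply, Matrix.add_apply]
  rw [pd_sum' i (u := fun c y => M y a c * N y c b) (fun c => (hM a c).mul (hN c b)), ← Finset.sum_add_distrib]
  exact Finset.sum_congr rfl fun c _ => pd_mul' i (hM a c) (hN c b)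

lemma matmul_diff {n : ℕ} {x : Fin n → ℝ}
    {M N : (Fin n → ℝ) → Matrix (Fin n) (Fin n) ℝ}
    (hM : ∀ a b, DifferentiableAt ℝ (fun y => M y a b) x)
    (hN : ∀ a b, DifferentiableAt ℝ (fun y => N y a b) x) (a b : Fin n) :
    DifferentiableAt ℝ (fun y => (M y * N y) a b) x := by
  simp only [Matrix.mul_apply]
  exact DifferentiableAt.fun_sum fun c _ => (hM a c).mul (hN c b)

lemma covDeriv_matrix {n : ℕ} (g ginv T : (Fin n → ℝ) → Fin n → Fin n → ℝ) (i : Fin n)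
    (x : Fin n → ℝ) :
    (Matrix.of fun a b => covDeriv g ginv T i a b x) =
      (Matrix.of fun a b => pd i (fun y => T y a b) x)
      - (Matrix.of fun l a => christoffel g ginv l i a x).transpose * Matrix.of (T x)
      - Matrix.of (T x) * (Matrix.of fun l a => christoffel g ginv l i a x) := by
  ext a b
  simp only [Matrix.of_apply, Matrix.mul_apply, Matrix.sub_apply, Matrix.transpose_apply, covDeriv]
  congr 1
  exact Finset.sum_congr rfl fun c _ => mul_comm _ _

/-- The square K_{ij} := f_{ik} g^{kl} f_{lj} of a Killing–Yano tensor
satisfies the Killing equation. -/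
theorem killingYano_square_is_killing
    (n : ℕ) (V : Set (Fin n → ℝ)) (hV : IsOpen V)
    (g ginv f : (Fin n → ℝ) → Fin n → Fin n → ℝ)
    (hg : ∀ i j, ContDiffOn ℝ (⊤ : ℕ∞) (fun x => g x i j) V)
    (hginv : ∀ i j, ContDiffOn ℝ (⊤ : ℕ∞) (fun x => ginv x i j) V)
    (hgsymm : ∀ x ∈ V, ∀ i j, g x i j = g x j i)
    (hinv : ∀ x ∈ V, ∀ i j, ∑ k, g x i k * ginv x k j = if i = j then (1 : ℝ) else 0)
    (hf : ∀ i j, ContDiffOn ℝ (⊤ : ℕ∞) (fun x => f x i j) V)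
    (hfanti : ∀ x ∈ V, ∀ j k, f x j k = -f x k j)
    (hKY : ∀ x ∈ V, ∀ i j k,
      covDeriv g ginv f i j k x + covDeriv g ginv f j i k x = 0) :
    ∀ x ∈ V, ∀ i j k,
      covDeriv g ginv (fun y a b => ∑ c, ∑ d, f y a c * ginv y c d * f y d b) i j k x
        + covDeriv g ginv (fun y a b => ∑ c, ∑ d, f y a c * ginv y c d * f y d b) j k i x
        + covDeriv g ginv (fun y a b => ∑ c, ∑ d, f y a c * ginv y c d * f y d b) k i j x
        = 0 := by
  intro x hx
  have dg : ∀ i j, DifferentiableAt ℝ (fun y => g y i j) x := fun i j =>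
    ((hg i j).contDiffAt (hV.mem_nhds hx)).differentiableAt (by simp)
  have dh : ∀ i j, DifferentiableAt ℝ (fun y => ginv y i j) x := fun i j =>
    ((hginv i j).contDiffAt (hV.mem_nhds hx)).differentiableAt (by simp)
  have df : ∀ i j, DifferentiableAt ℝ (fun y => f y i j) x := fun i j =>
    ((hf i j).contDiffAt (hV.mem_nhds hx)).differentiableAt (by simp)
  have hGH : ∀ y ∈ V, (Matrix.of (g y)) * (Matrix.of (ginv y)) = 1 := by
    intro y hy
    ext a b
    simpa [Matrix.mul_apply, Matrix.one_apply] using hinv y hy a b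
  have hHG : (Matrix.of (ginv x)) * (Matrix.of (g x)) = 1 :=
    mul_eq_one_comm.mp (hGH x hx)
  have hGt : (Matrix.of (g x)).transpose = Matrix.of (g x) := by
    ext a b
    exact hgsymm x hx b a
  have hHt : (Matrix.of (ginv x)).transpose = Matrix.of (ginv x) := by
    have h1 : (Matrix.of (ginv x)).transpose * Matrix.of (g x) = 1 := by
      have := congrArg Matrix.transpose (hGH x hx)
      rwa [Matrix.transpose_mul, hGt, Matrix.transpose_one] at this
    calc _ = (Matrix.of (ginv x)).transpose * (Matrix.of (g x) * Matrix.of (ginv x)) := by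
            rw [hGH x hx, mul_one]
      _ = _ := by rw [← mul_assoc, h1, one_mul]
  have hHs : ∀ a b, ginv x a b = ginv x b a := fun a b => congrFun (congrFun hHt b) a
  -- lowering the index of the Christoffel symbols
  have hlow : ∀ i a j, ∑ l, g x a l * christoffel g ginv l i j x =
      (1/2) * (pd i (fun y => g y a j) x + pd j (fun y => g y i a) x
        - pd a (fun y => g y i j) x) := by
    intro i a j
    unfold christoffel
    have key := fun m => hinv x hx a m
    set w : Fin n → ℝ := fun l => pd i (fun y => g y l j) x + pd j (fun y => g y i l) x
        - pd l (fun y => g y i j) x with hw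
    change ∑ l, g x a l * ((1/2) * ∑ m, ginv x l m * w m) = (1/2) * w a
    calc _ = (1/2) * ∑ m, (∑ l, g x a l * ginv x l m) * w m := by
            simp only [Finset.mul_sum, Finset.sum_mul]
            rw [Finset.sum_comm]
            exact Finset.sum_congr rfl fun _ _ => Finset.sum_congr rfl fun _ _ => by ring
      _ = _ := by simp [key]
  have hsd : ∀ i a b, pd i (fun y => g y a b) x = pd i (fun y => g y b a) x := fun i a b =>
    pd_congr_on hV hx i fun y hy => hgsymm y hy a b
  have hcompat : ∀ i, (Matrix.of fun a b => pd i (fun y => g y a b) x) =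
      (Matrix.of fun l a => christoffel g ginv l i a x).transpose * Matrix.of (g x)
      + Matrix.of (g x) * (Matrix.of fun l a => christoffel g ginv l i a x) := by
    intro i
    ext a b
    have e : ∑ l, christoffel g ginv l i a x * g x l b
        = ∑ l, g x b l * christoffel g ginv l i a x :=
      Finset.sum_congr rfl fun l _ => by rw [hgsymm x hx l b, mul_comm]
    simp only [Matrix.of_apply, Matrix.mul_apply, Matrix.add_apply, Matrix.transpose_apply]
    rw [e, hlow, hlow, hsd i b a]
    ring
  have hdH : ∀ i, (Matrix.of fun a b => pd i (fun y => ginv y a b) x) =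
      - (Matrix.of (ginv x) * (Matrix.of fun l a => christoffel g ginv l i a x).transpose)
      - (Matrix.of fun l a => christoffel g ginv l i a x) * Matrix.of (ginv x) := by
    intro i
    have h0 := pd_matmul (M := fun y => Matrix.of (g y)) (N := fun y => Matrix.of (ginv y)) i dg dh
    have h1 : (Matrix.of fun a b => pd i (fun y => (Matrix.of (g y) * Matrix.of (ginv y)) a b) x)
        = 0 := by
      ext a b
      have := pd_congr_on hV hx i (u := fun y => (Matrix.of (g y) * Matrix.of (ginv y)) a b)
        (v := fun _ => (1 : Matrix (Fin n) (Fin n) ℝ) a b) fun y hy => by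
          change (Matrix.of (g y) * Matrix.of (ginv y)) a b = _
          rw [hGH y hy]
      simp only [Matrix.of_apply, Matrix.zero_apply]
      rw [this]
      simp [pd]
    rw [h1] at h0
    change 0 = (Matrix.of fun a b => pd i (fun y => g y a b) x) * Matrix.of (ginv x)
      + Matrix.of (g x) * (Matrix.of fun a b => pd i (fun y => ginv y a b) x) at h0
    rw [hcompat i] at h0
    have hgh := hGH x hx
    generalize (Matrix.of fun a b => pd i (fun y => ginv y a b) x) = H' at *
    generalize (Matrix.of fun l a => christoffel g ginv l i a x) = C at *
    generalize Matrix.of (ginv x) = H at *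
    generalize Matrix.of (g x) = G at *
    have h2 : H * ((C.transpose * G + G * C) * H + G * H') = 0 := by rw [← h0, mul_zero]
    have h3 : H * ((C.transpose * G + G * C) * H + G * H')
        = H * C.transpose * (G * H) + (H * G) * C * H + (H * G) * H' := by noncomm_ring
    rw [h3, hgh, hHG] at h2
    simp only [mul_one, one_mul] at h2
    rw [eq_comm, ← sub_eq_zero, ← neg_eq_zero, ← h2]
    abel
  -- Leibniz rule
  have hleib : ∀ i, (Matrix.of fun a b => covDeriv g ginv
        (fun y a b => ∑ c, ∑ d, f y a c * ginv y c d * f y d b) i a b x) =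
      (Matrix.of fun a b => covDeriv g ginv f i a b x) * Matrix.of (ginv x) * Matrix.of (f x)
      + Matrix.of (f x) * Matrix.of (ginv x) * (Matrix.of fun a b => covDeriv g ginv f i a b x) := by
    intro i
    have hK : (fun y a b => ∑ c, ∑ d, f y a c * ginv y c d * f y d b) =
        fun y a b => (Matrix.of (f y) * Matrix.of (ginv y) * Matrix.of (f y) :
          Matrix (Fin n) (Fin n) ℝ) a b := by
      funext y a b
      simp only [Matrix.mul_apply, Matrix.of_apply, Finset.sum_mul]
      rw [Finset.sum_comm]
    have h1 := pd_matmul (M := fun y => Matrix.of (f y) * Matrix.of (ginv y))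
      (N := fun y => Matrix.of (f y)) i (matmul_diff df dh) df
    have h2 := pd_matmul (M := fun y => Matrix.of (f y))
      (N := fun y => Matrix.of (ginv y)) i df dh
    rw [hK, covDeriv_matrix, covDeriv_matrix]
    simp only [Matrix.of_apply] at h1 h2 ⊢
    rw [h1, h2, hdH i]
    change _ - _ * (Matrix.of (f x) * Matrix.of (ginv x) * Matrix.of (f x))
      - (Matrix.of (f x) * Matrix.of (ginv x) * Matrix.of (f x)) * _ = _
    noncomm_ring
  have hanti : ∀ i a b, covDeriv g ginv f i a b x = - covDeriv g ginv f i b a x := by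
    intro i a b
    have e1 : pd i (fun y => f y a b) x = - pd i (fun y => f y b a) x := by
      rw [pd_congr_on hV hx i fun y hy => hfanti y hy a b]
      simp [pd]
    unfold covDeriv
    rw [e1]
    simp only [fun l => hfanti x hx l b, fun l => hfanti x hx a l, mul_neg, Finset.sum_neg_distrib]
    ring
  have hS : ∀ i j k, covDeriv g ginv
        (fun y a b => ∑ c, ∑ d, f y a c * ginv y c d * f y d b) i j k x =
      (∑ c, ∑ d, covDeriv g ginv f i j c x * ginv x c d * f x d k)
      + ∑ c, ∑ d, covDeriv g ginv f i k c x * ginv x c d * f x d j := by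
    intro i j k
    have := congrFun (congrFun (hleib i) j) k
    simp only [Matrix.add_apply, Matrix.mul_apply, Matrix.of_apply, Finset.sum_mul] at this
    rw [this, Finset.sum_comm]
    congr 1
    refine Finset.sum_congr rfl fun c _ => Finset.sum_congr rfl fun d _ => ?_
    rw [hanti i c k, hfanti x hx j d, hHs d c]
    ring
  have hT : ∀ i j k, (∑ c, ∑ d, covDeriv g ginv f i j c x * ginv x c d * f x d k)
      = - ∑ c, ∑ d, covDeriv g ginv f j i c x * ginv x c d * f x d k := by
    intro i j k
    simp only [← Finset.sum_neg_distrib]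
    refine Finset.sum_congr rfl fun c _ => Finset.sum_congr rfl fun d _ => ?_
    rw [eq_neg_of_add_eq_zero_left (hKY x hx i j c)]
    ring
  intro i j k
  rw [hS, hS, hS, hT i j k, hT i k j, hT j k i]
  ring
end
end
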